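/- Let φ : N₁ ⥤ N₂ be an admissible epi-functor between nested graphs, and define an equivalence relation on the objects of N₁ by: A₁ ∼ B₁ (for A₁ ≠ B₁) iff φ(A₁) = φ(B₁) and both A₁ and B₁ are vertices of the fiber φ⁻¹(φ(A₁)). Let N₂' be the category obtained by identifying equivalent objects of N₁, with morphisms freely generated by the morphisms of N₁ subject to the composition relations of N₁. Then N₂' is a nested graph, i.e., N₂' contains no cycle of flags and admits a grading into a finite ordinal. -/

import Mathlib

open CategoryTheory

universe v u

/-- A morphism in a category is an identity morphism (up to `eqToHom`). -/
def IsId {C : Type u} [Category.{v} C] {A B : C} (f : A ⟶ B) : Prop :=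
  ∃ h : A = B, f = eqToHom h

/-- A flag in a nested graph is a non-identity morphism. -/
def IsFlag {C : Type u} [Category.{v} C] {A B : C} (f : A ⟶ B) : Prop :=
  ¬ IsId f

/-- An irreducible flag is a flag that cannot be written as the composite of two flags. -/
def IsIrred {C : Type u} [Category.{v} C] {A B : C} (f : A ⟶ B) : Prop :=
  IsFlag f ∧ ¬ ∃ (X : C) (g : A ⟶ X) (h : X ⟶ B), IsFlag g ∧ IsFlag h ∧ g ≫ h = f

/-- A grading: a functor to the finite ordinal `Fin n` (viewed as a preorder category)
sending every non-identity morphism to a non-identity morphism. -/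
def IsGrading {C : Type u} [Category.{v} C] {n : ℕ} (G : C ⥤ Fin n) : Prop :=
  ∀ ⦃A B : C⦄ (f : A ⟶ B), IsFlag f → IsFlag (G.map f)

/-- A nested graph: a category admitting a grading into some finite ordinal. -/
def IsNestedGraph (C : Type u) [Category.{v} C] : Prop :=
  ∃ (n : ℕ) (G : C ⥤ Fin n), IsGrading G

/-- A functor `φ` contracts a flag `f` if `φ.map f` is an identity. -/
def Contracts {C D : Type u} [Category.{v} C] [Category.{v} D]
    (φ : C ⥤ D) {A B : C} (f : A ⟶ B) : Prop :=
  IsId (φ.map f)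

/-- An admissible functor: it maps irreducible flags to identities or irreducible flags,
and whenever it contracts an irreducible flag with domain `A`, it contracts every
irreducible flag with domain `A`. -/
def IsAdmissible {C D : Type u} [Category.{v} C] [Category.{v} D] (φ : C ⥤ D) : Prop :=
  (∀ ⦃A B : C⦄ (f : A ⟶ B), IsIrred f → IsId (φ.map f) ∨ IsIrred (φ.map f)) ∧
  (∀ ⦃A B B' : C⦄ (f : A ⟶ B) (g : A ⟶ B'), IsIrred f → IsIrred g →
      Contracts φ f → Contracts φ g)

/-- The morphisms of the codomain generated by the image of a functor. -/
inductive GenBy {C D : Type u} [Category.{v} C] [Category.{v} D] (φ : C ⥤ D) :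
    ∀ {X Y : D}, (X ⟶ Y) → Prop
  | id (X : D) : GenBy φ (𝟙 X)
  | map {A B : C} (f : A ⟶ B) : GenBy φ (φ.map f)
  | comp {X Y Z : D} (f : X ⟶ Y) (g : Y ⟶ Z) :
      GenBy φ f → GenBy φ g → GenBy φ (f ≫ g)

/-- An epi-functor: its image generates the codomain. -/
def IsEpiFunctor {C D : Type u} [Category.{v} C] [Category.{v} D] (φ : C ⥤ D) : Prop :=
  Function.Surjective φ.obj ∧ ∀ ⦃X Y : D⦄ (f : X ⟶ Y), GenBy φ f

/-- `μ : C ⥤ D` exhibits `D` as the quotient of `C` identifying `r`-related objects,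
with morphisms freely generated by the morphisms of `C` subject to the composition
relations of `C` (expressed via the universal property). -/
def IsQuotientBy {C D : Type u} [Category.{v} C] [Category.{v} D]
    (r : C → C → Prop) (μ : C ⥤ D) : Prop :=
  (∀ A B : C, μ.obj A = μ.obj B ↔ Relation.EqvGen r A B) ∧
  Function.Surjective μ.obj ∧
  (∀ ⦃X Y : D⦄ (f : X ⟶ Y), GenBy μ f) ∧
  (∀ (E : Type u) [Category.{v} E] (F : C ⥤ E),
      (∀ A B : C, r A B → F.obj A = F.obj B) → ∃! F' : D ⥤ E, μ ⋙ F' = F)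

/-- A merger: an admissible epi-functor exhibiting its codomain as the quotient of its
domain by an equivalence relation on objects, with morphisms freely generated subject to
the composition relations of the domain. -/
def IsMerger {C D : Type u} [Category.{v} C] [Category.{v} D] (μ : C ⥤ D) : Prop :=
  IsAdmissible μ ∧ IsEpiFunctor μ ∧
    ∃ r : C → C → Prop, Equivalence r ∧ IsQuotientBy r μ

/-- `A` is a vertex of its fiber under `φ`: it is not the domain of any flag
contracted by `φ`. -/
def IsVertexOver {C D : Type u} [Category.{v} C] [Category.{v} D]
    (φ : C ⥤ D) (A : C) : Prop :=
  ∀ ⦃B : C⦄ (f : A ⟶ B), Contracts φ f → IsId f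

/-- `A₁` is a vertex of the fiber of `φ` over `A₂`. -/
def IsFiberVertex {C D : Type u} [Category.{v} C] [Category.{v} D]
    (φ : C ⥤ D) (A₂ : D) (A₁ : C) : Prop :=
  φ.obj A₁ = A₂ ∧ IsVertexOver φ A₁

/-- A contraction: an admissible epi-functor each of whose fibers is a corolla,
i.e. has a unique vertex. -/
def IsContraction {C D : Type u} [Category.{v} C] [Category.{v} D] (κ : C ⥤ D) : Prop :=
  IsAdmissible κ ∧ IsEpiFunctor κ ∧ ∀ A₂ : D, ∃! A₁ : C, IsFiberVertex κ A₂ A₁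

/-- The canonical merger relation of `φ`: it relates distinct objects `A ≠ B` exactly when
`φ A = φ B` and both `A` and `B` are vertices of the fiber of `φ` over `φ A`. -/
def mergerRel {C D : Type u} [Category.{v} C] [Category.{v} D] (φ : C ⥤ D) :
    C → C → Prop :=
  fun A B => A ≠ B ∧ φ.obj A = φ.obj B ∧ IsVertexOver φ A ∧ IsVertexOver φ B

/-- A canonical merger–contraction decomposition of `φ`: the merger part is the quotient
of the domain identifying, within each fiber of `φ`, all objects that are vertices of that
fiber. -/
def IsCanonicalDecomp {C P D : Type u} [Category.{v} C] [Category.{v} P] [Category.{v} D]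
    (φ : C ⥤ D) (μ : C ⥤ P) (κ : P ⥤ D) : Prop :=
  IsQuotientBy (mergerRel φ) μ ∧ μ ⋙ κ = φ

/-- Two merger–contraction pairs are equal as morphisms of nested graphs: one is obtained
from the other by shifting an isomorphism from the merger to the contraction. -/
def PairEquiv {A B P P' : Type u} [Category.{v} A] [Category.{v} B]
    [Category.{v} P] [Category.{v} P']
    (μ : A ⥤ P) (κ : P ⥤ B) (μ' : A ⥤ P') (κ' : P' ⥤ B) : Prop :=
  ∃ (e : P ⥤ P') (e' : P' ⥤ P), e ⋙ e' = 𝟭 P ∧ e' ⋙ e = 𝟭 P' ∧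
    μ ⋙ e = μ' ∧ e ⋙ κ' = κ

/-- A category contains no cycle of flags. -/
def NoFlagCycles (C : Type u) [Category.{v} C] : Prop :=
  ∀ (k : ℕ), 0 < k → ∀ (obj : Fin (k + 1) → C)
    (flag : ∀ i : Fin k, obj i.castSucc ⟶ obj i.succ),
    (∀ i, IsFlag (flag i)) → obj 0 ≠ obj (Fin.last k)

/-!
Grade the objects of `N₁` lexicographically: first by the grade of the image in `N₂`, then by the
grade in `N₁`, except that every vertex of a fiber of `φ` is moved to a common top value. A flag
that `φ` does not contract raises the first coordinate. A contracted flag keeps it and raises the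
second, because the domain of such a flag is never a vertex of its fiber. Identified objects get
equal grades, so the grading descends to the quotient, where every morphism is a composite of images
of morphisms of `N₁`.
-/

section Ranking

variable {C : Type u} [Category.{v} C] {α : Type*}

/-- A ranking of a category: a function on objects that strictly increases along flags. This is the
object part of a grading, with an arbitrary preorder in place of a finite ordinal. -/
def IsRanking [Preorder α] (rank : C → α) : Prop :=
  ∀ ⦃A B : C⦄ (f : A ⟶ B), IsFlag f → rank A < rank B

theorem IsGrading.isRanking {n : ℕ} {G : C ⥤ Fin n} (hG : IsGrading G) : IsRanking G.obj :=
  fun _ _ f hf => (leOfHom (G.map f)).lt_of_ne fun h => hG f hf ⟨h, Subsingleton.elim _ _⟩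

theorem IsRanking.le [Preorder α] {rank : C → α} (hrank : IsRanking rank) {A B : C}
    (f : A ⟶ B) : rank A ≤ rank B := by
  by_cases hf : IsId f
  · exact (congrArg rank hf.1).le
  · exact (hrank f hf).le

theorem IsRanking.strictMono_comp {β : Type*} [Preorder α] [Preorder β] {rank : C → α}
    (hrank : IsRanking rank) {e : α → β} (he : StrictMono e) : IsRanking (e ∘ rank) :=
  fun _ _ f hf => he (hrank f hf)

theorem IsRanking.isNestedGraph_of_fin {n : ℕ} {rank : C → Fin n} (hrank : IsRanking rank) :
    IsNestedGraph C :=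
  ⟨n, { obj := rank, map := fun f => homOfLE (hrank.le f) },
    fun _ _ f hf hid => (hrank f hf).ne hid.1⟩

theorem IsRanking.isNestedGraph [LinearOrder α] [Finite α] {rank : C → α}
    (hrank : IsRanking rank) : IsNestedGraph C :=
  have := Fintype.ofFinite α
  (hrank.strictMono_comp (Fintype.orderIsoFinOfCardEq α rfl).symm.strictMono).isNestedGraph_of_fin

theorem IsRanking.noFlagCycles [Preorder α] {rank : C → α} (hrank : IsRanking rank) :
    NoFlagCycles C := by
  intro k hk obj flag hflag hcycle
  have hmono : StrictMono (rank ∘ obj) :=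
    Fin.strictMono_iff_lt_succ.2 fun i => hrank (flag i) (hflag i)
  have hlt : (0 : Fin (k + 1)) < Fin.last k := Fin.lt_def.2 hk
  exact (hmono hlt).ne (congrArg rank hcycle)

end Ranking

section Functor

variable {C D : Type u} [Category.{v} C] [Category.{v} D] {α β : Type*}

theorem IsId.map (F : C ⥤ D) {A B : C} {f : A ⟶ B} (hf : IsId f) : IsId (F.map f) := by
  obtain ⟨rfl, rfl⟩ := hf
  exact ⟨rfl, F.map_id A⟩

theorem GenBy.isId_or_lt [Preorder α] {F : C ⥤ D} {rank : D → α}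
    (hrank : IsRanking (rank ∘ F.obj)) {X Y : D} {f : X ⟶ Y} (hf : GenBy F f) :
    IsId f ∨ rank X < rank Y := by
  induction hf with
  | id X => exact Or.inl ⟨rfl, rfl⟩
  | map f => exact (em (IsId f)).imp (IsId.map F) (hrank f)
  | comp f g _ _ hf hg =>
    rcases hf with ⟨rfl, rfl⟩ | hf
    · simpa only [eqToHom_refl, Category.id_comp] using hg
    · rcases hg with ⟨rfl, rfl⟩ | hg
      · exact Or.inr hf
      · exact Or.inr (hf.trans hg)

theorem IsEpiFunctor.isRanking [Preorder α] {F : C ⥤ D} (hF : IsEpiFunctor F) {rank : D → α}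
    (hrank : IsRanking (rank ∘ F.obj)) : IsRanking rank :=
  fun _ _ f hf => ((hF.2 f).isId_or_lt hrank).resolve_left hf

theorem IsEpiFunctor.exists_isRanking [Preorder α] {F : C ⥤ D} (hF : IsEpiFunctor F)
    {rank : C → α} (hrank : IsRanking rank) (hfactors : rank.FactorsThrough F.obj) :
    ∃ rank' : D → α, IsRanking rank' := by
  let rank' : D → α := rank ∘ Function.surjInv hF.1
  have hcomp : rank' ∘ F.obj = rank :=
    funext fun A => hfactors (Function.surjInv_eq hF.1 (F.obj A))
  exact ⟨rank', hF.isRanking (hcomp ▸ hrank)⟩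

theorem IsQuotientBy.isEpiFunctor {r : C → C → Prop} {μ : C ⥤ D} (hμ : IsQuotientBy r μ) :
    IsEpiFunctor μ :=
  ⟨hμ.2.1, hμ.2.2.1⟩

open Classical in
/-- The modification of `rank` that gives every vertex of a fiber of `φ` the same top value, so that
all vertices of a fiber can be identified. -/
noncomputable def fiberRank (φ : C ⥤ D) (rank : C → α) (A : C) : WithTop α :=
  if IsVertexOver φ A then ⊤ else rank A

theorem fiberRank_of_isVertexOver {φ : C ⥤ D} {A : C} (hA : IsVertexOver φ A) (rank : C → α) :
    fiberRank φ rank A = ⊤ :=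
  if_pos hA

theorem fiberRank_of_not_isVertexOver {φ : C ⥤ D} {A : C} (hA : ¬ IsVertexOver φ A)
    (rank : C → α) : fiberRank φ rank A = rank A :=
  if_neg hA

theorem IsRanking.fiberRank_lt [Preorder α] {φ : C ⥤ D} {rank : C → α} (hrank : IsRanking rank)
    {A B : C} {f : A ⟶ B} (hf : IsFlag f) (hφ : Contracts φ f) :
    fiberRank φ rank A < fiberRank φ rank B := by
  have hA : ¬ IsVertexOver φ A := fun h => hf (h f hφ)
  rw [fiberRank_of_not_isVertexOver hA]
  by_cases hB : IsVertexOver φ B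
  · rw [fiberRank_of_isVertexOver hB]
    exact WithTop.coe_lt_top _
  · rw [fiberRank_of_not_isVertexOver hB]
    exact WithTop.coe_lt_coe.2 (hrank f hf)

/-- The lexicographic rank on the domain of `φ`: the rank of the image in the codomain, with ties
broken by `fiberRank`. -/
noncomputable def lexRank (φ : C ⥤ D) (rankC : C → α) (rankD : D → β) (A : C) :
    β ×ₗ WithTop α :=
  toLex (rankD (φ.obj A), fiberRank φ rankC A)

theorem IsRanking.lexRank [Preorder α] [Preorder β] {rankC : C → α} {rankD : D → β}
    (hC : IsRanking rankC) (hD : IsRanking rankD) (φ : C ⥤ D) :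
    IsRanking (lexRank φ rankC rankD) := by
  intro A B f hf
  refine Prod.Lex.toLex_lt_toLex.2 ?_
  by_cases hφ : Contracts φ f
  · exact Or.inr ⟨congrArg rankD hφ.1, hC.fiberRank_lt hf hφ⟩
  · exact Or.inl (hD (φ.map f) hφ)

theorem lexRank_eq_of_mergerRel {φ : C ⥤ D} (rankC : C → α) (rankD : D → β) {A B : C}
    (h : mergerRel φ A B) : lexRank φ rankC rankD A = lexRank φ rankC rankD B := by
  obtain ⟨-, hφ, hA, hB⟩ := h
  rw [lexRank, lexRank, hφ, fiberRank_of_isVertexOver hA, fiberRank_of_isVertexOver hB]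

theorem lexRank_eq_of_eqvGen_mergerRel {φ : C ⥤ D} (rankC : C → α) (rankD : D → β) {A B : C}
    (h : Relation.EqvGen (mergerRel φ) A B) : lexRank φ rankC rankD A = lexRank φ rankC rankD B :=
  (eq_equivalence.comap (lexRank φ rankC rankD)).eqvGen_iff.1 <|
    h.mono fun _ _ => lexRank_eq_of_mergerRel rankC rankD

end Functor

theorem canonical_quotient_is_nestedGraph_general {N₁ N₂ N₂' : Type u}
    [Category.{v} N₁] [Category.{v} N₂] [Category.{v} N₂']
    (h₁ : IsNestedGraph N₁) (h₂ : IsNestedGraph N₂) (φ : N₁ ⥤ N₂)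
    (μ : N₁ ⥤ N₂') (hμ : IsEpiFunctor μ)
    (hker : ∀ A B : N₁, μ.obj A = μ.obj B → Relation.EqvGen (mergerRel φ) A B) :
    NoFlagCycles N₂' ∧ IsNestedGraph N₂' := by
  obtain ⟨_, G, hG⟩ := h₁
  obtain ⟨_, H, hH⟩ := h₂
  have hfactors : (lexRank φ G.obj H.obj).FactorsThrough μ.obj :=
    fun A B hAB => lexRank_eq_of_eqvGen_mergerRel G.obj H.obj (hker A B hAB)
  obtain ⟨_, hrank⟩ := hμ.exists_isRanking (hG.isRanking.lexRank hH.isRanking φ) hfactors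
  exact ⟨hrank.noFlagCycles, hrank.isNestedGraph⟩

/-- if `φ : N₁ ⥤ N₂` is an admissible epi-functor between nested graphs and
`μ : N₁ ⥤ N₂'` is the quotient of `N₁` identifying distinct objects `A₁ ∼ B₁` exactly
when `φ A₁ = φ B₁` and both are vertices of the fiber `φ⁻¹ (φ A₁)` (with morphisms freely
generated by the morphisms of `N₁` subject to the composition relations of `N₁`), then
`N₂'` is a nested graph: it contains no cycle of flags and admits a grading into a finite
ordinal. -/
theorem canonical_quotient_is_nestedGraph {N₁ N₂ N₂' : Type u}
    [Category.{v} N₁] [Category.{v} N₂] [Category.{v} N₂']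
    (h₁ : IsNestedGraph N₁) (h₂ : IsNestedGraph N₂)
    (φ : N₁ ⥤ N₂) (hadm : IsAdmissible φ) (hepi : IsEpiFunctor φ)
    (μ : N₁ ⥤ N₂') (hμ : IsQuotientBy (mergerRel φ) μ) :
    NoFlagCycles N₂' ∧ IsNestedGraph N₂' := by
  exact canonical_quotient_is_nestedGraph_general h₁ h₂ φ μ hμ.isEpiFunctor
    fun A B => (hμ.1 A B).1
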